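/- arXiv:2211.14529 — 4 statements merged into one kernel-verified Lean document; each statement's English description precedes it below -/
import Mathlib

section
/- Fix an integer n ≥ 1 and a real c > 0. Let f : (a₁, a₂) → (0, π/(2c)) be a C² solution of the type II Grim Reaper ODE. If a₂ < +∞, then f(s) does not tend to 0 as s → a₂ from the left; likewise, if a₁ > −∞, then f(s) does not tend to 0 as s → a₁ from the right. In other words, solutions of the type II Grim Reaper ODE do not blow up to the 0-axis in finite time. -/
open Real Set Filter Topology

/-- The type II warping function `b_II(y) = n·c·tan(c·y)`. -/
noncomputable def bII (n : ℕ) (c : ℝ) : ℝ → ℝ := fun y => (n : ℝ) * c * Real.tan (c * y)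

/-- `f` is a `C²` solution of the type II Grim Reaper ODE on `L`, with values in
`I_II = (0, π/(2c))`. -/
def IsGrimReaperSolII (n : ℕ) (c : ℝ) (f : ℝ → ℝ) (L : Set ℝ) : Prop :=
  (∀ s ∈ L, f s ∈ Set.Ioo 0 (π / (2 * c))) ∧
  ContDiffOn ℝ 2 f L ∧
  ∀ s ∈ L,
    deriv (deriv f) s =
      (1 - (deriv f s) ^ 2 / (bII n c (f s)) ^ 2) * bII n c (f s) * (-(c ^ 2 * (n : ℝ) ^ 2))
        + (deriv (bII n c) (f s) / bII n c (f s)) * (deriv f s) ^ 2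

/-!
In the coordinate `u = G ∘ f`, where `G` is a primitive of `1 / b`, the equation
`f'' = (1 - f'² / b(f)²) b(f) d + (b'(f) / b(f)) f'²` becomes `u'' = d (1 - u'²)`: the terms in `b'`
cancel. When `d ≤ 0` this gives `u'' ≥ d`, so `u` is convex up to a quadratic polynomial and stays
bounded below near every finite time. For `b = bII n c` the primitive
`G y = log (sin (c y)) / (n c²)` tends to `-∞` as `y → 0⁺`, so `f` cannot reach `0` in finite time.
-/

section SemiconvexLowerBound

variable {D : Set ℝ} {u : ℝ → ℝ}

lemma exists_supporting_line_of_convexOn (hu : ConvexOn ℝ D u) {x : ℝ} (hx : x ∈ interior D) :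
    ∃ m : ℝ, ∀ y ∈ D, u x + m * (y - x) ≤ u y := by
  refine ⟨derivWithin u (Ioi x) x, fun y hy => ?_⟩
  rcases lt_trichotomy y x with hyx | rfl | hxy
  · have hslope : slope u y x ≤ derivWithin u (Ioi x) x :=
      (hu.slope_le_leftDeriv_of_mem_interior hy hx hyx).trans
        (hu.leftDeriv_le_rightDeriv_of_mem_interior hx)
    rw [slope_def_field, div_le_iff₀ (sub_pos.2 hyx)] at hslope
    linarith
  · simp
  · have hslope := hu.rightDeriv_le_slope_of_mem_interior hx hy hxy
    rw [slope_def_field, le_div_iff₀ (sub_pos.2 hxy)] at hslope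
    linarith

variable {l : Filter ℝ} [l.NeBot] {k : ℝ}

lemma not_tendsto_atBot_of_convexOn (hu : ConvexOn ℝ D u) (hD : (interior D).Nonempty)
    (hl : l ≤ 𝓝[D] k) : ¬ Tendsto u l atBot := by
  intro hbot
  obtain ⟨x, hx⟩ := hD
  obtain ⟨m, hm⟩ := exists_supporting_line_of_convexOn hu hx
  have hline : Tendsto (fun s => u x + m * (s - x)) l (𝓝 (u x + m * (k - x))) :=
    ((by fun_prop : Continuous fun s => u x + m * (s - x)).tendsto k).mono_left
      (hl.trans nhdsWithin_le_nhds)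
  have hle : ∀ᶠ s in l, u x + m * (s - x) ≤ u s :=
    eventually_of_mem (hl self_mem_nhdsWithin) hm
  exact not_tendsto_nhds_of_tendsto_atBot (tendsto_atBot_mono' l hle hbot) _ hline

lemma not_tendsto_atBot_of_const_le_deriv2 (hDo : IsOpen D) (hDc : Convex ℝ D)
    {u' u'' : ℝ → ℝ} {d : ℝ} (hu : ∀ s ∈ D, HasDerivAt u (u' s) s)
    (hu' : ∀ s ∈ D, HasDerivAt u' (u'' s) s) (hd : ∀ s ∈ D, d ≤ u'' s)
    (hl : l ≤ 𝓝[D] k) : ¬ Tendsto u l atBot := by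
  intro hbot
  let v : ℝ → ℝ := fun s => u s + -(d / 2) * s ^ 2
  have hv : ∀ s ∈ D, HasDerivAt v (u' s - d * s) s := fun s hs =>
    ((hu s hs).add ((hasDerivAt_pow 2 s).const_mul (-(d / 2)))).congr_deriv (by ring)
  have hv' : ∀ s ∈ D, HasDerivAt (fun s => u' s - d * s) (u'' s - d) s := fun s hs =>
    ((hu' s hs).sub ((hasDerivAt_id s).const_mul d)).congr_deriv (by ring)
  have hconvex : ConvexOn ℝ D v :=
    convexOn_of_hasDerivWithinAt2_nonneg hDc
      (fun s hs => (hv s hs).continuousAt.continuousWithinAt)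
      (fun s hs => (hv s (interior_subset hs)).hasDerivWithinAt)
      (fun s hs => (hv' s (interior_subset hs)).hasDerivWithinAt)
      (fun s hs => sub_nonneg.2 (hd s (interior_subset hs)))
  have hquad : Tendsto (fun s => -(d / 2) * s ^ 2) l (𝓝 (-(d / 2) * k ^ 2)) :=
    ((by fun_prop : Continuous fun s : ℝ => -(d / 2) * s ^ 2).tendsto k).mono_left
      (hl.trans nhdsWithin_le_nhds)
  have hDne : (interior D).Nonempty := by
    rw [hDo.interior_eq]
    exact nonempty_of_mem (hl self_mem_nhdsWithin)
  exact not_tendsto_atBot_of_convexOn hconvex hDne hl (hbot.atBot_add hquad)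

end SemiconvexLowerBound

section WarpedEquation

variable {b f f' : ℝ → ℝ} {d : ℝ}

lemma hasDerivAt_div_warping {s : ℝ} (hb : DifferentiableAt ℝ b (f s)) (hb₀ : b (f s) ≠ 0)
    (hf : HasDerivAt f (f' s) s)
    (hf' : HasDerivAt f' ((1 - f' s ^ 2 / b (f s) ^ 2) * b (f s) * d
      + deriv b (f s) / b (f s) * f' s ^ 2) s) :
    HasDerivAt (fun t => f' t / b (f t)) (d * (1 - (f' s / b (f s)) ^ 2)) s := by
  refine (hf'.div (hb.hasDerivAt.comp s hf) hb₀).congr_deriv ?_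
  simp only [Function.comp_apply]
  field_simp
  ring

lemma not_tendsto_atBot_primitive_comp_of_warpedEquation {D : Set ℝ} (hDo : IsOpen D)
    (hDc : Convex ℝ D) {G : ℝ → ℝ} (hd : d ≤ 0)
    (hb : ∀ s ∈ D, DifferentiableAt ℝ b (f s)) (hb₀ : ∀ s ∈ D, b (f s) ≠ 0)
    (hG : ∀ s ∈ D, HasDerivAt G (b (f s))⁻¹ (f s))
    (hf : ∀ s ∈ D, HasDerivAt f (f' s) s)
    (hf' : ∀ s ∈ D, HasDerivAt f' ((1 - f' s ^ 2 / b (f s) ^ 2) * b (f s) * d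
      + deriv b (f s) / b (f s) * f' s ^ 2) s)
    {l : Filter ℝ} [l.NeBot] {k : ℝ} (hl : l ≤ 𝓝[D] k) :
    ¬ Tendsto (G ∘ f) l atBot := by
  have hu : ∀ s ∈ D, HasDerivAt (G ∘ f) (f' s / b (f s)) s := fun s hs =>
    ((hG s hs).comp s (hf s hs)).congr_deriv (inv_mul_eq_div _ _)
  have hu' : ∀ s ∈ D, HasDerivAt (fun t => f' t / b (f t)) (d * (1 - (f' s / b (f s)) ^ 2)) s :=
    fun s hs => hasDerivAt_div_warping (hb s hs) (hb₀ s hs) (hf s hs) (hf' s hs)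
  refine not_tendsto_atBot_of_const_le_deriv2 (d := d) hDo hDc hu hu' (fun s _ => ?_) hl
  nlinarith [mul_nonneg (neg_nonneg.2 hd) (sq_nonneg (f' s / b (f s)))]

end WarpedEquation

section TypeII

variable {n : ℕ} {c y : ℝ}

/-- The primitive of `1 / bII n c` on `I_II = (0, π/(2c))`, in which the type II equation loses its
dependence on position. The additive constant is chosen so that it vanishes at `π/(2c)`. -/
noncomputable def bIIInvPrimitive (n : ℕ) (c : ℝ) : ℝ → ℝ :=
  fun y => log (sin (c * y)) / (n * c ^ 2)

lemma mul_mem_Ioo_zero_pi_div_two (hc : 0 < c) (hy : y ∈ Ioo 0 (π / (2 * c))) :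
    c * y ∈ Ioo 0 (π / 2) := by
  obtain ⟨hy₀, hy₁⟩ := hy
  rw [lt_div_iff₀ (by positivity)] at hy₁
  exact ⟨by positivity, by linarith⟩

lemma cos_mul_pos_of_mem_Ioo (hc : 0 < c) (hy : y ∈ Ioo 0 (π / (2 * c))) : 0 < cos (c * y) :=
  cos_pos_of_mem_Ioo
    (Ioo_subset_Ioo_left (neg_nonpos.2 pi_div_two_pos.le) (mul_mem_Ioo_zero_pi_div_two hc hy))

lemma sin_mul_pos_of_mem_Ioo (hc : 0 < c) (hy : y ∈ Ioo 0 (π / (2 * c))) : 0 < sin (c * y) :=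
  sin_pos_of_mem_Ioo
    (Ioo_subset_Ioo_right (half_le_self pi_pos.le) (mul_mem_Ioo_zero_pi_div_two hc hy))

lemma bII_pos_of_mem_Ioo (hn : 0 < n) (hc : 0 < c) (hy : y ∈ Ioo 0 (π / (2 * c))) :
    0 < bII n c y := by
  obtain ⟨hcy₀, hcy₁⟩ := mul_mem_Ioo_zero_pi_div_two hc hy
  exact mul_pos (by positivity) (tan_pos_of_pos_of_lt_pi_div_two hcy₀ hcy₁)

lemma differentiableAt_bII (hy : cos (c * y) ≠ 0) : DifferentiableAt ℝ (bII n c) y :=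
  ((differentiableAt_tan.2 hy).comp y (by fun_prop)).const_mul _

lemma hasDerivAt_bIIInvPrimitive (hy : sin (c * y) ≠ 0) :
    HasDerivAt (bIIInvPrimitive n c) (bII n c y)⁻¹ y := by
  have hc : c ≠ 0 := by
    rintro rfl
    simp at hy
  refine ((((hasDerivAt_id y).const_mul c).sin.log hy).div_const (n * c ^ 2)).congr_deriv ?_
  simp only [bII, tan_eq_sin_div_cos, id]
  field_simp

lemma tendsto_bIIInvPrimitive_nhdsGT_zero (hn : 0 < n) (hc : 0 < c) :
    Tendsto (bIIInvPrimitive n c) (𝓝[>] 0) atBot := by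
  have hsin : Tendsto (fun y => sin (c * y)) (𝓝[>] 0) (𝓝[>] 0) := by
    refine tendsto_nhdsWithin_iff.2 ⟨?_, ?_⟩
    · have h := (by fun_prop : Continuous fun y => sin (c * y)).tendsto 0
      simp only [mul_zero, sin_zero] at h
      exact h.mono_left nhdsWithin_le_nhds
    · filter_upwards [Ioo_mem_nhdsGT (by positivity : 0 < π / (2 * c))] with y hy
      exact sin_mul_pos_of_mem_Ioo hc hy
  exact (tendsto_log_nhdsGT_zero.comp hsin).atBot_div_const (by positivity)

end TypeII

namespace IsGrimReaperSolII

variable {n : ℕ} {c : ℝ} {f : ℝ → ℝ} {L : Set ℝ}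

lemma hasDerivAt (hf : IsGrimReaperSolII n c f L) (hL : IsOpen L) {s : ℝ} (hs : s ∈ L) :
    HasDerivAt f (deriv f s) s :=
  ((hf.2.1.differentiableOn two_ne_zero).differentiableAt (hL.mem_nhds hs)).hasDerivAt

lemma hasDerivAt_deriv (hf : IsGrimReaperSolII n c f L) (hL : IsOpen L) {s : ℝ} (hs : s ∈ L) :
    HasDerivAt (deriv f) ((1 - deriv f s ^ 2 / bII n c (f s) ^ 2) * bII n c (f s)
      * (-(c ^ 2 * (n : ℝ) ^ 2)) + deriv (bII n c) (f s) / bII n c (f s) * deriv f s ^ 2) s := by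
  have hdiff : DifferentiableOn ℝ (deriv f) L :=
    (hf.2.1.deriv_of_isOpen hL one_add_one_eq_two.le).differentiableOn one_ne_zero
  exact hf.2.2 s hs ▸ (hdiff.differentiableAt (hL.mem_nhds hs)).hasDerivAt

lemma not_tendsto_zero (hf : IsGrimReaperSolII n c f L) (hn : 0 < n) (hc : 0 < c)
    (hLo : IsOpen L) (hLc : Convex ℝ L) {l : Filter ℝ} [l.NeBot] {k : ℝ} (hl : l ≤ 𝓝[L] k) :
    ¬ Tendsto f l (𝓝 0) := by
  intro hzero
  have hpos : ∀ᶠ s in l, f s ∈ Ioi 0 :=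
    eventually_of_mem (hl self_mem_nhdsWithin) fun s hs => (hf.1 s hs).1
  have hbot : Tendsto (bIIInvPrimitive n c ∘ f) l atBot :=
    (tendsto_bIIInvPrimitive_nhdsGT_zero hn hc).comp (tendsto_nhdsWithin_iff.2 ⟨hzero, hpos⟩)
  exact not_tendsto_atBot_primitive_comp_of_warpedEquation hLo hLc
    (neg_nonpos.2 (by positivity))
    (fun s hs => differentiableAt_bII (cos_mul_pos_of_mem_Ioo hc (hf.1 s hs)).ne')
    (fun s hs => (bII_pos_of_mem_Ioo hn hc (hf.1 s hs)).ne')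
    (fun s hs => hasDerivAt_bIIInvPrimitive (sin_mul_pos_of_mem_Ioo hc (hf.1 s hs)).ne')
    (fun s hs => hf.hasDerivAt hLo hs) (fun s hs => hf.hasDerivAt_deriv hLo hs) hl hbot

end IsGrimReaperSolII

section RealPointsOfERealInterval

variable (a₁ a₂ : EReal)

lemma isOpen_setOf_coe_mem_Ioo : IsOpen {s : ℝ | a₁ < (s : EReal) ∧ (s : EReal) < a₂} :=
  isOpen_Ioo.preimage continuous_coe_real_ereal

lemma convex_setOf_coe_mem_Ioo : Convex ℝ {s : ℝ | a₁ < (s : EReal) ∧ (s : EReal) < a₂} :=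
  (ordConnected_Ioo.preimage_mono EReal.coe_strictMono.monotone).convex

variable {a₁ a₂} {k : ℝ}

lemma nhdsLT_le_nhdsWithin_setOf_coe_mem_Ioo (ha : a₁ < k) :
    𝓝[<] k ≤ 𝓝[{s : ℝ | a₁ < (s : EReal) ∧ (s : EReal) < k}] k := by
  have hcoe : Tendsto Real.toEReal (𝓝[<] k) (𝓝[<] (k : EReal)) :=
    continuous_coe_real_ereal.continuousWithinAt.tendsto_nhdsWithin
      fun _ hs => EReal.coe_lt_coe_iff.2 hs
  exact le_inf nhdsWithin_le_nhds (le_principal_iff.2 (hcoe (Ioo_mem_nhdsLT ha)))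

lemma nhdsGT_le_nhdsWithin_setOf_coe_mem_Ioo (ha : k < a₂) :
    𝓝[>] k ≤ 𝓝[{s : ℝ | (k : EReal) < s ∧ (s : EReal) < a₂}] k := by
  have hcoe : Tendsto Real.toEReal (𝓝[>] k) (𝓝[>] (k : EReal)) :=
    continuous_coe_real_ereal.continuousWithinAt.tendsto_nhdsWithin
      fun _ hs => EReal.coe_lt_coe_iff.2 hs
  exact le_inf nhdsWithin_le_nhds (le_principal_iff.2 (hcoe (Ioo_mem_nhdsGT ha)))

end RealPointsOfERealInterval

/-- Solutions of the type II Grim Reaper ODE on `(a₁, a₂)` do not blow up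
to the `0`-axis in finite time: if `a₂` is finite then `f` does not tend to `0` at `a₂⁻`,
and if `a₁` is finite then `f` does not tend to `0` at `a₁⁺`. -/
theorem grimReaperII_no_blowup_to_zero (n : ℕ) (hn : 1 ≤ n) (c : ℝ) (hc : 0 < c)
    (a₁ a₂ : EReal) (ha : a₁ < a₂) (f : ℝ → ℝ)
    (hf : IsGrimReaperSolII n c f {s : ℝ | a₁ < (s : EReal) ∧ (s : EReal) < a₂}) :
    (∀ k : ℝ, a₂ = (k : EReal) → ¬ Filter.Tendsto f (𝓝[<] k) (𝓝 0)) ∧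
    (∀ k : ℝ, a₁ = (k : EReal) → ¬ Filter.Tendsto f (𝓝[>] k) (𝓝 0)) := by
  have hopen := isOpen_setOf_coe_mem_Ioo a₁ a₂
  have hconvex := convex_setOf_coe_mem_Ioo a₁ a₂
  constructor
  · rintro k rfl
    exact hf.not_tendsto_zero hn hc hopen hconvex (nhdsLT_le_nhdsWithin_setOf_coe_mem_Ioo ha)
  · rintro k rfl
    exact hf.not_tendsto_zero hn hc hopen hconvex (nhdsGT_le_nhdsWithin_setOf_coe_mem_Ioo ha)
end

section
/- Fix an integer n ≥ 1 and a real c > 0. Let f : (a₁, a₂) → (−∞, 0) be a C² solution of the type III Grim Reaper ODE. If a₂ < +∞, then f(s) does not tend to 0 as s → a₂ from the left; likewise, if a₁ > −∞, then f(s) does not tend to 0 as s → a₁ from the right. In other words, solutions of the type III Grim Reaper ODE do not blow up to the 0-axis in finite time. -/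
open Real Set Filter Topology

/-- The type III warping function `b_III(y) = -n·c·tanh(c·y)`. -/
noncomputable def bIII (n : ℕ) (c : ℝ) : ℝ → ℝ := fun y => -((n : ℝ) * c * Real.tanh (c * y))

/-- `f` is a `C²` solution of the type III Grim Reaper ODE on `L`, with values in
`I_III = (-∞, 0)`. -/
def IsGrimReaperSolIII (n : ℕ) (c : ℝ) (f : ℝ → ℝ) (L : Set ℝ) : Prop :=
  (∀ s ∈ L, f s ∈ Set.Iio (0 : ℝ)) ∧
  ContDiffOn ℝ 2 f L ∧
  ∀ s ∈ L,
    deriv (deriv f) s =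
      (1 - (deriv f s) ^ 2 / (bIII n c (f s)) ^ 2) * bIII n c (f s) * (c ^ 2 * (n : ℝ) ^ 2)
        + (deriv (bIII n c) (f s) / bIII n c (f s)) * (deriv f s) ^ 2

/-!
Along a solution the ratio `p = f' / b(f)` satisfies the Riccati equation `p' = d (1 - p²)`, whose
right-hand side is at most `d ≥ 0`; hence `p` is bounded above on bounded time intervals. If `f → 0`
in finite time, then eventually `b(f) ≤ C |f|`, because `b(y) = O(y)` at `0`, so that
`f' = p b(f) ≤ -K f`. By Grönwall's inequality `f` then stays below a negative multiple of an
exponential, which is a contradiction. The left endpoint reduces to the right one because the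
equation is invariant under `s ↦ -s`.
-/

theorem not_tendsto_zero_of_deriv_le_mul {f : ℝ → ℝ} {K k : ℝ}
    (hf : ∀ᶠ s in 𝓝[<] k, DifferentiableAt ℝ f s) (hneg : ∀ᶠ s in 𝓝[<] k, f s < 0)
    (hderiv : ∀ᶠ s in 𝓝[<] k, deriv f s ≤ K * f s) :
    ¬ Tendsto f (𝓝[<] k) (𝓝 0) := by
  intro hlim
  obtain ⟨s₀, hs₀, hsub⟩ :=
    mem_nhdsLT_iff_exists_Ico_subset.1 (hf.and (hneg.and hderiv))
  have gronwall : ∀ᶠ s in 𝓝[<] k, f s ≤ f s₀ * exp (K * (s - s₀)) := by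
    filter_upwards [Ico_mem_nhdsLT hs₀] with s hs
    have hsub' : ∀ t ∈ Icc s₀ s, t ∈ Ico s₀ k := fun t ht => ⟨ht.1, ht.2.trans_lt hs.2⟩
    rw [← gronwallBound_ε0]
    refine le_gronwallBound_of_liminf_deriv_right_le (f' := deriv f)
      (fun t ht => (hsub (hsub' t ht)).1.continuousAt.continuousWithinAt)
      (fun t ht r hr => ?_) le_rfl (fun t ht => ?_) s (right_mem_Icc.2 hs.1)
    · exact (hsub (hsub' t (Ico_subset_Icc_self ht))).1.hasDerivAt.hasDerivWithinAt
        |>.liminf_right_slope_le hr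
    · simpa only [add_zero] using (hsub (hsub' t (Ico_subset_Icc_self ht))).2.2
  have hbound : Tendsto (fun s => f s₀ * exp (K * (s - s₀))) (𝓝[<] k)
      (𝓝 (f s₀ * exp (K * (k - s₀)))) :=
    (Continuous.tendsto (by fun_prop) k).mono_left nhdsWithin_le_nhds
  have hlimit_neg : f s₀ * exp (K * (k - s₀)) < 0 :=
    mul_neg_of_neg_of_pos (hsub (left_mem_Ico.2 hs₀)).2.1 (exp_pos _)
  exact (le_of_tendsto_of_tendsto hlim hbound gronwall).not_gt hlimit_neg

/-- `f` is a `C²` solution on `L`, with values in `(-∞, 0)`, of the Grim Reaper ODE with warping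
function `b` and constant `d`. Type III is the case `b = bIII n c` and `d = c² n²`. -/
structure IsGrimReaperSol (b : ℝ → ℝ) (d : ℝ) (f : ℝ → ℝ) (L : Set ℝ) : Prop where
  neg : ∀ s ∈ L, f s < 0
  contDiffOn : ContDiffOn ℝ 2 f L
  deriv_deriv : ∀ s ∈ L,
    deriv (deriv f) s =
      (1 - (deriv f s) ^ 2 / (b (f s)) ^ 2) * b (f s) * d
        + (deriv b (f s) / b (f s)) * (deriv f s) ^ 2

namespace IsGrimReaperSol

variable {b : ℝ → ℝ} {d : ℝ} {f : ℝ → ℝ} {L : Set ℝ} {s s₀ k : ℝ}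

theorem comp_neg (hf : IsGrimReaperSol b d f L) :
    IsGrimReaperSol b d (fun s => f (-s)) (Neg.neg ⁻¹' L) where
  neg s hs := hf.neg (-s) hs
  contDiffOn := hf.contDiffOn.comp contDiff_neg.contDiffOn fun _ hs => hs
  deriv_deriv s hs := by
    have hderiv : deriv (fun t => f (-t)) = fun t => -deriv f (-t) :=
      funext fun t => deriv_comp_neg f t
    have hderiv₂ : deriv (fun t => -deriv f (-t)) s = deriv (deriv f) (-s) := by
      rw [deriv.fun_neg, deriv_comp_neg (deriv f) s, neg_neg]
    rw [hderiv, hderiv₂, hf.deriv_deriv (-s) hs, neg_sq]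

theorem differentiableAt (hf : IsGrimReaperSol b d f L) (hL : IsOpen L) (hs : s ∈ L) :
    DifferentiableAt ℝ f s :=
  (hf.contDiffOn.differentiableOn two_ne_zero).differentiableAt (hL.mem_nhds hs)

theorem differentiableAt_deriv (hf : IsGrimReaperSol b d f L) (hL : IsOpen L) (hs : s ∈ L) :
    DifferentiableAt ℝ (deriv f) s :=
  ((hf.contDiffOn.deriv_of_isOpen (m := 1) hL (by norm_num)).differentiableOn
    one_ne_zero).differentiableAt (hL.mem_nhds hs)

theorem hasDerivAt_deriv_div (hf : IsGrimReaperSol b d f L) (hL : IsOpen L) (hs : s ∈ L)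
    (hb : DifferentiableAt ℝ b (f s)) (hb₀ : b (f s) ≠ 0) :
    HasDerivAt (fun t => deriv f t / b (f t)) (d * (1 - (deriv f s / b (f s)) ^ 2)) s := by
  have hbf : HasDerivAt (fun t => b (f t)) (deriv b (f s) * deriv f s) s :=
    hb.hasDerivAt.comp s (hf.differentiableAt hL hs).hasDerivAt
  refine ((hf.differentiableAt_deriv hL hs).hasDerivAt.fun_div hbf hb₀).congr_deriv ?_
  rw [hf.deriv_deriv s hs]
  field_simp
  ring

theorem deriv_div_sub_le (hf : IsGrimReaperSol b d f L) (hL : IsOpen L) (hd : 0 ≤ d)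
    (hb : DifferentiableOn ℝ b (Iio 0)) (hpos : ∀ y < 0, 0 < b y)
    (hs : s₀ ≤ s) (hsub : Icc s₀ s ⊆ L) :
    deriv f s / b (f s) - deriv f s₀ / b (f s₀) ≤ d * (s - s₀) := by
  have riccati : ∀ t ∈ Icc s₀ s, HasDerivAt (fun t => deriv f t / b (f t))
      (d * (1 - (deriv f t / b (f t)) ^ 2)) t := fun t ht =>
    have hft := hf.neg t (hsub ht)
    hf.hasDerivAt_deriv_div hL (hsub ht) (hb.differentiableAt (Iio_mem_nhds hft)) (hpos _ hft).ne'
  refine (convex_Icc s₀ s).image_sub_le_mul_sub_of_deriv_le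
    (fun t ht => (riccati t ht).continuousAt.continuousWithinAt)
    (fun t ht => (riccati t (interior_subset ht)).differentiableAt.differentiableWithinAt)
    (fun t ht => ?_) s₀ (left_mem_Icc.2 hs) s (right_mem_Icc.2 hs) hs
  rw [(riccati t (interior_subset ht)).deriv]
  exact mul_le_of_le_one_right hd (sub_le_self _ (sq_nonneg _))

theorem exists_eventually_deriv_le_mul (hf : IsGrimReaperSol b d f L) (hL : IsOpen L)
    (hk : L ∈ 𝓝[<] k) (hd : 0 ≤ d) (hb : DifferentiableOn ℝ b (Iio 0))
    (hpos : ∀ y < 0, 0 < b y) :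
    ∃ M, 0 ≤ M ∧ ∀ᶠ s in 𝓝[<] k, deriv f s ≤ M * b (f s) := by
  obtain ⟨s₀, hs₀, hsub⟩ := mem_nhdsLT_iff_exists_Ico_subset.1 hk
  refine ⟨max 0 (deriv f s₀ / b (f s₀) + d * (k - s₀)), le_max_left _ _, ?_⟩
  filter_upwards [Ico_mem_nhdsLT hs₀] with s hs
  rw [← div_le_iff₀ (hpos _ (hf.neg s (hsub hs)))]
  have hratio := hf.deriv_div_sub_le hL hd hb hpos hs.1 ((Icc_subset_Ico_right hs.2).trans hsub)
  have htime : d * (s - s₀) ≤ d * (k - s₀) := by gcongr; exact hs.2.le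
  exact le_max_of_le_right (by linarith)

theorem not_tendsto_zero_left (hf : IsGrimReaperSol b d f L) (hL : IsOpen L) (hk : L ∈ 𝓝[<] k)
    (hd : 0 ≤ d) (hb : DifferentiableOn ℝ b (Iio 0)) (hpos : ∀ y < 0, 0 < b y)
    (hb₀ : b =O[𝓝[<] 0] id) :
    ¬ Tendsto f (𝓝[<] k) (𝓝 0) := by
  intro hlim
  have hneg : ∀ᶠ s in 𝓝[<] k, f s < 0 := eventually_of_mem hk hf.neg
  obtain ⟨M, hM, hderiv⟩ := hf.exists_eventually_deriv_le_mul hL hk hd hb hpos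
  obtain ⟨C, hC⟩ := (hb₀.comp_tendsto (tendsto_nhdsWithin_iff.2 ⟨hlim, hneg⟩)).bound
  have hlinear : ∀ᶠ s in 𝓝[<] k, deriv f s ≤ -(M * C) * f s := by
    filter_upwards [hneg, hderiv, hC] with s hs hs' hbound
    calc deriv f s ≤ M * b (f s) := hs'
      _ ≤ M * (C * |f s|) := by gcongr; exact (le_abs_self _).trans hbound
      _ = -(M * C) * f s := by rw [abs_of_neg hs]; ring
  exact not_tendsto_zero_of_deriv_le_mul
    (eventually_of_mem hk fun _ hs => hf.differentiableAt hL hs) hneg hlinear hlim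

theorem not_tendsto_zero_right (hf : IsGrimReaperSol b d f L) (hL : IsOpen L) (hk : L ∈ 𝓝[>] k)
    (hd : 0 ≤ d) (hb : DifferentiableOn ℝ b (Iio 0)) (hpos : ∀ y < 0, 0 < b y)
    (hb₀ : b =O[𝓝[<] 0] id) :
    ¬ Tendsto f (𝓝[>] k) (𝓝 0) := fun hlim =>
  have hreflect : Tendsto Neg.neg (𝓝[<] (-k)) (𝓝[>] k) := tendsto_neg_nhdsLT_neg
  hf.comp_neg.not_tendsto_zero_left (hL.preimage continuous_neg) (hreflect hk) hd hb hpos hb₀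
    (hlim.comp hreflect)

end IsGrimReaperSol

section WarpingFunction

variable {n : ℕ} {c : ℝ}

theorem bIII_pos (hn : 1 ≤ n) (hc : 0 < c) {y : ℝ} (hy : y < 0) : 0 < bIII n c y := by
  have hn₀ : (0 : ℝ) < n := Nat.cast_pos.2 hn
  have htanh : tanh (c * y) < 0 := by
    rw [tanh_eq_sinh_div_cosh]
    exact div_neg_of_neg_of_pos (sinh_neg_iff.2 (mul_neg_of_pos_of_neg hc hy)) (cosh_pos _)
  exact neg_pos.2 (mul_neg_of_pos_of_neg (mul_pos hn₀ hc) htanh)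

theorem differentiable_bIII : Differentiable ℝ (bIII n c) := by
  have hcosh : ∀ y : ℝ, cosh (c * y) ≠ 0 := fun y => (cosh_pos _).ne'
  unfold bIII
  simp only [tanh_eq_sinh_div_cosh]
  fun_prop (disch := exact hcosh _)

theorem bIII_isBigO_id : bIII n c =O[𝓝 0] id := by
  have hzero : bIII n c 0 = 0 := by simp [bIII]
  exact (differentiable_bIII 0).isBigO_sub.congr (fun y => by rw [hzero, sub_zero]) sub_zero

end WarpingFunction

theorem grimReaperIII_no_blowup_to_zero_general {b : ℝ → ℝ} {d : ℝ} (hd : 0 ≤ d)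
    (hb : DifferentiableOn ℝ b (Iio 0)) (hpos : ∀ y < 0, 0 < b y) (hb₀ : b =O[𝓝[<] 0] id)
    {a₁ a₂ : EReal} (ha : a₁ < a₂) {f : ℝ → ℝ}
    (hf : IsGrimReaperSol b d f {s : ℝ | a₁ < (s : EReal) ∧ (s : EReal) < a₂}) :
    (∀ k : ℝ, a₂ = (k : EReal) → ¬ Tendsto f (𝓝[<] k) (𝓝 0)) ∧
    (∀ k : ℝ, a₁ = (k : EReal) → ¬ Tendsto f (𝓝[>] k) (𝓝 0)) := by
  have hcoe : Continuous ((↑) : ℝ → EReal) := continuous_coe_real_ereal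
  have hopen : IsOpen {s : ℝ | a₁ < (s : EReal) ∧ (s : EReal) < a₂} := isOpen_Ioo.preimage hcoe
  constructor
  · rintro k rfl
    refine hf.not_tendsto_zero_left hopen ?_ hd hb hpos hb₀
    filter_upwards [self_mem_nhdsWithin,
      mem_nhdsWithin_of_mem_nhds (hcoe.continuousAt (Ioi_mem_nhds ha))] with s hsk has
    exact ⟨has, EReal.coe_lt_coe hsk⟩
  · rintro k rfl
    refine hf.not_tendsto_zero_right hopen ?_ hd hb hpos hb₀
    filter_upwards [self_mem_nhdsWithin,
      mem_nhdsWithin_of_mem_nhds (hcoe.continuousAt (Iio_mem_nhds ha))] with s hks hsa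
    exact ⟨EReal.coe_lt_coe hks, hsa⟩

/-- Solutions of the type III Grim Reaper ODE on `(a₁, a₂)` do not blow up
to the `0`-axis in finite time: if `a₂` is finite then `f` does not tend to `0` at `a₂⁻`,
and if `a₁` is finite then `f` does not tend to `0` at `a₁⁺`. -/
theorem grimReaperIII_no_blowup_to_zero (n : ℕ) (hn : 1 ≤ n) (c : ℝ) (hc : 0 < c)
    (a₁ a₂ : EReal) (ha : a₁ < a₂) (f : ℝ → ℝ)
    (hf : IsGrimReaperSolIII n c f {s : ℝ | a₁ < (s : EReal) ∧ (s : EReal) < a₂}) :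
    (∀ k : ℝ, a₂ = (k : EReal) → ¬ Filter.Tendsto f (𝓝[<] k) (𝓝 0)) ∧
    (∀ k : ℝ, a₁ = (k : EReal) → ¬ Filter.Tendsto f (𝓝[>] k) (𝓝 0)) :=
  grimReaperIII_no_blowup_to_zero_general (by positivity) differentiable_bIII.differentiableOn
    (fun _ => bIII_pos hn hc) (bIII_isBigO_id.mono nhdsWithin_le_nhds) ha
    ⟨hf.1, hf.2.1, hf.2.2⟩
end

section
/- Fix an integer n ≥ 1 and a real c > 0. Let L ⊆ ℝ be an open interval and f : L → (0, π/(2c)) a C² solution of the type II Grim Reaper ODE. If f'(s₀) = 0 for some s₀ ∈ L, then s₀ is a strict absolute maximum of f: for every s ∈ L with s ≠ s₀ one has f(s) < f(s₀). In particular, f has at most one critical point. -/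
/-!
At a critical point the terms of the ODE carrying `f'` vanish, so `f'' = -c² n² b_II(f) < 0` there:
every critical point is a local maximum and none is a local minimum. Suppose `f s₀ ≤ f s` for some
other point `s`. Points between `s₀` and `s` close to `s₀` have values at most `f s₀` and are not
local minima, so `f` takes a value below both end values between `s₀` and `s`; its minimum over
that segment is then an interior local minimum, which cannot exist.
-/

open Real Set Filter Topology

theorem uIcc_sdiff_uIoo_same {α : Type*} [LinearOrder α] (a b : α) :
    uIcc a b \ uIoo a b = {a, b} := by
  rcases le_total a b with hab | hba
  · rw [uIcc_of_le hab, uIoo_of_le hab, Icc_sdiff_Ioo_same hab]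
  · rw [uIcc_of_ge hba, uIoo_of_ge hba, Icc_sdiff_Ioo_same hba, pair_comm]

theorem lt_of_isLocalMax_of_forall_not_isLocalMin {α β : Type*}
    [ConditionallyCompleteLinearOrder α] [DenselyOrdered α] [TopologicalSpace α] [OrderTopology α]
    [LinearOrder β] [TopologicalSpace β] [ClosedIicTopology β] {f : α → β} {a b : α}
    (hab : a ≠ b) (hf : ContinuousOn f (uIcc a b)) (hmax : IsLocalMax f a)
    (hmin : ∀ x ∈ uIoo a b, ¬IsLocalMin f x) : f b < f a := by
  by_contra! hle
  have ha : a ∈ closure (uIoo a b) := closure_uIoo hab ▸ left_mem_uIcc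
  obtain ⟨x, hx, hfx⟩ : ∃ x ∈ uIoo a b, f x ≤ f a :=
    ((mem_closure_iff_frequently.1 ha).and_eventually hmax).exists
  obtain ⟨y, hfy, hy⟩ : ∃ y, f y < f x ∧ y ∈ uIoo a b := by
    have hdrop : ∃ᶠ y in 𝓝 x, f y < f x := by
      simpa only [IsLocalMin, IsMinFilter, not_eventually, not_le] using hmin x hx
    exact (hdrop.and_eventually (isOpen_Ioo.mem_nhds hx)).exists
  have hends : ∀ z ∈ uIcc a b \ uIoo a b, f y < f z := by
    rw [uIcc_sdiff_uIoo_same]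
    have hya : f y < f a := hfy.trans_le hfx
    rintro z (rfl | rfl)
    exacts [hya, hya.trans_le hle]
  obtain ⟨m, hm, hloc⟩ := isCompact_uIcc.exists_isLocalMin_mem_open uIoo_subset_uIcc_self hf
    (uIoo_subset_uIcc_self hy) hends isOpen_Ioo
  exact hmin m hm hloc

theorem not_isLocalMin_of_deriv_deriv_neg {f : ℝ → ℝ} {x : ℝ} (hneg : deriv (deriv f) x < 0)
    (hf : ContinuousAt f x) : ¬IsLocalMin f x := by
  intro hmin
  have hmax : IsLocalMax f x := isLocalMax_of_deriv_deriv_neg hneg hmin.deriv_eq_zero hf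
  have hconst : f =ᶠ[𝓝 x] fun _ => f x := by
    filter_upwards [hmax, hmin] with y hle hge using le_antisymm hle hge
  have hzero : deriv (deriv f) x = 0 := by
    simpa only [deriv_const', deriv_const] using hconst.deriv.deriv_eq
  exact hneg.ne hzero

theorem lt_of_deriv_eq_zero_of_deriv_deriv_neg {f : ℝ → ℝ} {L : Set ℝ} (hLopen : IsOpen L)
    (hLconn : L.OrdConnected) (hf : ContinuousOn f L)
    (hneg : ∀ x ∈ L, deriv f x = 0 → deriv (deriv f) x < 0) {a b : ℝ} (ha : a ∈ L) (hb : b ∈ L)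
    (hab : a ≠ b) (hcrit : deriv f a = 0) : f b < f a := by
  have hcont : ∀ x ∈ L, ContinuousAt f x := fun x hx => hf.continuousAt (hLopen.mem_nhds hx)
  have hsub : uIcc a b ⊆ L := hLconn.uIcc_subset ha hb
  have hmax : IsLocalMax f a := isLocalMax_of_deriv_deriv_neg (hneg a ha hcrit) hcrit (hcont a ha)
  refine lt_of_isLocalMax_of_forall_not_isLocalMin hab (hf.mono hsub) hmax fun x hx hmin => ?_
  have hxL : x ∈ L := hsub (uIoo_subset_uIcc_self hx)
  exact not_isLocalMin_of_deriv_deriv_neg (hneg x hxL hmin.deriv_eq_zero) (hcont x hxL) hmin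

theorem bII_pos {n : ℕ} (hn : 0 < n) {c : ℝ} (hc : 0 < c) {y : ℝ} (hy : y ∈ Ioo 0 (π / (2 * c))) :
    0 < bII n c y := by
  have hlt : c * y < π / 2 := by
    rw [← lt_div_iff₀' hc, div_div]
    exact hy.2
  have htan : 0 < tan (c * y) := tan_pos_of_pos_of_lt_pi_div_two (mul_pos hc hy.1) hlt
  have hn' : (0 : ℝ) < n := Nat.cast_pos.2 hn
  exact mul_pos (mul_pos hn' hc) htan

theorem IsGrimReaperSolII.deriv_deriv_of_deriv_eq_zero {n : ℕ} {c : ℝ} {f : ℝ → ℝ} {L : Set ℝ}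
    (hf : IsGrimReaperSolII n c f L) {s : ℝ} (hs : s ∈ L) (hcrit : deriv f s = 0) :
    deriv (deriv f) s = -(c ^ 2 * (n : ℝ) ^ 2 * bII n c (f s)) := by
  rw [hf.2.2 s hs, hcrit]
  ring

theorem IsGrimReaperSolII.deriv_deriv_neg_of_deriv_eq_zero {n : ℕ} (hn : 0 < n) {c : ℝ}
    (hc : 0 < c) {f : ℝ → ℝ} {L : Set ℝ} (hf : IsGrimReaperSolII n c f L) {s : ℝ} (hs : s ∈ L)
    (hcrit : deriv f s = 0) : deriv (deriv f) s < 0 := by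
  rw [hf.deriv_deriv_of_deriv_eq_zero hs hcrit, neg_lt_zero]
  have hb : 0 < bII n c (f s) := bII_pos hn hc (hf.1 s hs)
  positivity

/-- A critical point of a solution of the type II Grim Reaper ODE on an
open interval is a strict absolute maximum. -/
theorem grimReaperII_critical_point_is_strict_max (n : ℕ) (hn : 1 ≤ n) (c : ℝ) (hc : 0 < c)
    (L : Set ℝ) (hLopen : IsOpen L) (hLconn : L.OrdConnected)
    (f : ℝ → ℝ) (hf : IsGrimReaperSolII n c f L)
    (s₀ : ℝ) (hs₀ : s₀ ∈ L) (hcrit : deriv f s₀ = 0) :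
    ∀ s ∈ L, s ≠ s₀ → f s < f s₀ :=
  fun _ hs hne => lt_of_deriv_eq_zero_of_deriv_deriv_neg hLopen hLconn hf.2.1.continuousOn
    (fun _ hx => hf.deriv_deriv_neg_of_deriv_eq_zero hn hc hx) hs₀ hs hne.symm hcrit
end

section
/- Fix an integer n ≥ 1, a real c > 0, and a constant c₁ > 0. Let y₀ ∈ (−∞, 0) and define g(y) = 1 / ( tanh(c·y) · sqrt( c²·n² + c₁·sinh(c·y)^{2n} ) ) for y < 0. Then g is Lebesgue integrable on the interval (−∞, y₀), and g is not Lebesgue integrable on the interval (y₀, 0). -/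
open Real Set Filter Topology MeasureTheory

/-!
Write `D x = tanh x * √(a + b * sinh x ^ (2 * n))`, so that the integrand is `1 / D (c * y)`. As
`x → -∞`, `|tanh x|` is bounded below and the square root dominates `|sinh x|`, so `1 / D x` is
`O(exp x)`. At `0`, `D` is differentiable and vanishes, so `|1 / D x|` is bounded below by a
multiple of `1 / |x|`, which is not integrable.
-/

open scoped Interval

lemma exp_neg_isBigO_sinh_atBot : (fun x : ℝ => exp (-x)) =O[atBot] sinh := by
  refine .of_bound 4 ?_
  filter_upwards [eventually_le_atBot (-1)] with x hx
  have hexp : exp x ≤ 1 := exp_le_one_iff.2 (by linarith)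
  have hexp_neg : -x + 1 ≤ exp (-x) := add_one_le_exp (-x)
  rw [norm_of_nonneg (exp_pos _).le, norm_eq_abs]
  have habs : -sinh x ≤ |sinh x| := neg_le_abs _
  rw [sinh_eq] at habs ⊢
  linarith

lemma one_isBigO_tanh_atBot : (fun _ : ℝ => (1 : ℝ)) =O[atBot] tanh := by
  have hcosh : cosh =O[atBot] sinh :=
    ((Asymptotics.isBigO_refl sinh atBot).add exp_neg_isBigO_sinh_atBot).congr_left
      fun x => by rw [← cosh_sub_sinh]; ring
  refine (hcosh.mul (Asymptotics.isBigO_refl (fun x => (cosh x)⁻¹) atBot)).congr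
    (fun x => mul_inv_cancel₀ (cosh_pos x).ne') fun x => ?_
  rw [tanh_eq_sinh_div_cosh, div_eq_mul_inv]

lemma differentiable_tanh : Differentiable ℝ tanh := by
  simpa only [← tanh_eq_sinh_div_cosh] using
    differentiable_sinh.fun_div differentiable_cosh fun x => (cosh_pos x).ne'

lemma tanh_ne_zero_iff {x : ℝ} : tanh x ≠ 0 ↔ x ≠ 0 :=
  tanh_injective.ne_iff' tanh_zero

lemma isBigO_sqrt_add_mul_pow {α : Type*} {l : Filter α} {f : α → ℝ} {n : ℕ} (hn : n ≠ 0)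
    {a b : ℝ} (ha : 0 ≤ a) (hb : 0 < b) (hf : ∀ᶠ x in l, 1 ≤ |f x|) :
    f =O[l] fun x => √(a + b * f x ^ (2 * n)) := by
  refine .of_bound (√b)⁻¹ ?_
  filter_upwards [hf] with x hx
  rw [norm_eq_abs, norm_of_nonneg (sqrt_nonneg _), ← sqrt_inv, ← sqrt_mul (by positivity)]
  refine le_sqrt_of_sq_le ?_
  calc |f x| ^ 2 ≤ |f x| ^ (2 * n) := pow_le_pow_right₀ hx (by omega)
    _ = f x ^ (2 * n) := (even_two_mul n).pow_abs _
    _ = b⁻¹ * (b * f x ^ (2 * n)) := (inv_mul_cancel_left₀ hb.ne' _).symm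
    _ ≤ b⁻¹ * (a + b * f x ^ (2 * n)) := by gcongr; linarith

lemma not_intervalIntegrable_inv_of_differentiableAt {𝕜 : Type*} [NormedDivisionRing 𝕜]
    [NormedSpace ℝ 𝕜] {f : ℝ → 𝕜} {x₀ u v : ℝ} (hf : DifferentiableAt ℝ f x₀) (hf₀ : f x₀ = 0)
    (hne : ∀ᶠ x in 𝓝[≠] x₀, f x ≠ 0) (huv : u ≠ v) (hx₀ : x₀ ∈ [[u, v]]) :
    ¬ IntervalIntegrable (fun x => (f x)⁻¹) volume u v := by
  have hO : f =O[𝓝[≠] x₀] fun x => x - x₀ := by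
    simpa only [hf₀, sub_zero] using hf.isBigO_sub.mono nhdsWithin_le_nhds
  exact not_intervalIntegrable_of_sub_inv_isBigO_punctured
    (hO.inv_rev (hne.mono fun _ hx h => absurd h hx)) huv hx₀

/-- The denominator of the integrand in the rescaled variable `x = c * y`, with a free constant
`a` in place of `c ^ 2 * n ^ 2` and `b` in place of `c₁`. -/
noncomputable def betaIIIDenom (n : ℕ) (a b x : ℝ) : ℝ :=
  tanh x * √(a + b * sinh x ^ (2 * n))

namespace betaIIIDenom

variable {n : ℕ} {a b c y₀ : ℝ}

lemma apply_neg (n : ℕ) (a b x : ℝ) : betaIIIDenom n a b (-x) = -betaIIIDenom n a b x := by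
  simp only [betaIIIDenom, tanh_neg, sinh_neg, (even_two_mul n).neg_pow, neg_mul]

lemma apply_zero (n : ℕ) (a b : ℝ) : betaIIIDenom n a b 0 = 0 := by
  rw [betaIIIDenom, tanh_zero, zero_mul]

lemma continuous (n : ℕ) (a b : ℝ) : Continuous (betaIIIDenom n a b) :=
  differentiable_tanh.continuous.mul (by fun_prop)

lemma ne_zero_of_radicand_pos {x : ℝ} (hx : x ≠ 0) (hr : 0 < a + b * sinh x ^ (2 * n)) :
    betaIIIDenom n a b x ≠ 0 :=
  mul_ne_zero (tanh_ne_zero_iff.2 hx) (sqrt_pos.2 hr).ne'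

lemma ne_zero (ha : 0 ≤ a) (hb : 0 < b) {x : ℝ} (hx : x ≠ 0) : betaIIIDenom n a b x ≠ 0 := by
  have hsinh : 0 < sinh x ^ (2 * n) := (even_two_mul n).pow_pos (sinh_ne_zero.2 hx)
  exact ne_zero_of_radicand_pos hx (by positivity)

lemma exp_neg_isBigO_atBot (hn : n ≠ 0) (ha : 0 ≤ a) (hb : 0 < b) :
    (fun x => exp (-x)) =O[atBot] betaIIIDenom n a b := by
  have hsinh : ∀ᶠ x : ℝ in atBot, 1 ≤ |sinh x| := by
    filter_upwards [eventually_le_atBot (-1)] with x hx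
    exact le_abs.2 (.inr (by linarith [sinh_le_self_iff.2 (show x ≤ 0 by linarith)]))
  have hsqrt := exp_neg_isBigO_sinh_atBot.trans (isBigO_sqrt_add_mul_pow hn ha hb hsinh)
  exact (one_isBigO_tanh_atBot.mul hsqrt).congr_left fun x => one_mul _

lemma inv_comp_mul_isBigO_exp_atBot (hn : n ≠ 0) (ha : 0 ≤ a) (hb : 0 < b) (hc : 0 < c) :
    (fun y => (betaIIIDenom n a b (c * y))⁻¹) =O[atBot] fun y => exp (c * y) := by
  have hO := ((exp_neg_isBigO_atBot hn ha hb).inv_rev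
    (.of_forall fun x h => absurd h (exp_pos _).ne')).comp_tendsto (tendsto_id.const_mul_atBot hc)
  simpa only [Function.comp_def, id, exp_neg, inv_inv] using hO

lemma integrableOn_Iio_inv_comp_mul_of_pos (hn : n ≠ 0) (ha : 0 ≤ a) (hb : 0 < b) (hc : 0 < c)
    (hy₀ : y₀ < 0) : IntegrableOn (fun y => (betaIIIDenom n a b (c * y))⁻¹) (Iio y₀) := by
  have hcont : ContinuousOn (fun y => (betaIIIDenom n a b (c * y))⁻¹) (Iic y₀) :=
    ((continuous n a b).comp (continuous_const_mul c)).continuousOn.inv₀ fun y hy =>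
      ne_zero ha hb (mul_ne_zero hc.ne' (lt_of_le_of_lt hy hy₀).ne)
  exact ((hcont.locallyIntegrableOn measurableSet_Iic).integrableOn_of_isBigO_atBot
    (inv_comp_mul_isBigO_exp_atBot hn ha hb hc)
    ⟨Iic 0, Iic_mem_atBot 0, integrableOn_exp_mul_Iic hc 0⟩).mono_set Iio_subset_Iic_self

lemma integrableOn_Iio_inv_comp_mul (hn : n ≠ 0) (ha : 0 ≤ a) (hb : 0 < b) (hc : c ≠ 0)
    (hy₀ : y₀ < 0) : IntegrableOn (fun y => (betaIIIDenom n a b (c * y))⁻¹) (Iio y₀) := by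
  rcases hc.lt_or_gt with hneg | hpos
  · simpa only [Pi.neg_def, neg_mul, apply_neg, inv_neg, neg_neg] using
      (integrableOn_Iio_inv_comp_mul_of_pos hn ha hb (neg_pos.2 hneg) hy₀).neg
  · exact integrableOn_Iio_inv_comp_mul_of_pos hn ha hb hpos hy₀

lemma differentiableAt_zero (hn : n ≠ 0) (ha : a ≠ 0) (b : ℝ) :
    DifferentiableAt ℝ (betaIIIDenom n a b) 0 :=
  differentiable_tanh.differentiableAt.mul (.sqrt (by fun_prop) (by simp [hn, ha]))

lemma eventually_ne_zero (hn : n ≠ 0) (ha : 0 < a) (b : ℝ) :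
    ∀ᶠ x in 𝓝[≠] 0, betaIIIDenom n a b x ≠ 0 := by
  have hr : ContinuousAt (fun x => a + b * sinh x ^ (2 * n)) 0 := by fun_prop
  have hpos : ∀ᶠ x in 𝓝 0, 0 < a + b * sinh x ^ (2 * n) :=
    hr.eventually_const_lt (by simp [hn, ha])
  filter_upwards [self_mem_nhdsWithin, nhdsWithin_le_nhds hpos] with x hx hrx
  exact ne_zero_of_radicand_pos hx hrx

lemma not_integrableOn_Ioo_inv_comp_mul (hn : n ≠ 0) (ha : 0 < a) (b : ℝ) (hc : c ≠ 0)
    (hy₀ : y₀ < 0) : ¬ IntegrableOn (fun y => (betaIIIDenom n a b (c * y))⁻¹) (Ioo y₀ 0) := by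
  have hx : ¬ IntervalIntegrable (fun x => (betaIIIDenom n a b x)⁻¹) volume (c * y₀) 0 :=
    not_intervalIntegrable_inv_of_differentiableAt (differentiableAt_zero hn ha.ne' b)
      (apply_zero n a b) (eventually_ne_zero hn ha b) (mul_ne_zero hc hy₀.ne) right_mem_uIcc
  rw [← IntervalIntegrable.comp_mul_left_iff hc, mul_div_cancel_left₀ _ hc, zero_div] at hx
  rwa [← intervalIntegrable_iff_integrableOn_Ioo_of_le hy₀.le]

end betaIIIDenom

theorem betaIII_integrability_general {n : ℕ} (hn : n ≠ 0) {a : ℝ} (ha : 0 < a) (b : ℝ)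
    {c : ℝ} (hc : c ≠ 0) {y₀ : ℝ} (hy₀ : y₀ < 0) :
    (0 < b → IntegrableOn
      (fun y => 1 / (tanh (c * y) * √(a + b * sinh (c * y) ^ (2 * n)))) (Iio y₀)) ∧
    ¬ IntegrableOn
      (fun y => 1 / (tanh (c * y) * √(a + b * sinh (c * y) ^ (2 * n)))) (Ioo y₀ 0) := by
  simp only [one_div]
  exact ⟨fun hb => betaIIIDenom.integrableOn_Iio_inv_comp_mul hn ha.le hb hc hy₀,
    betaIIIDenom.not_integrableOn_Ioo_inv_comp_mul hn ha b hc hy₀⟩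

/-- For `c₁ > 0` and `y₀ < 0`, the function
`g(y) = 1/(tanh(c·y)·√(c²n² + c₁·sinh(c·y)^{2n}))` is Lebesgue integrable on `(-∞, y₀)`
but not on `(y₀, 0)`. -/
theorem betaIII_integrability (n : ℕ) (hn : 1 ≤ n) (c : ℝ) (hc : 0 < c)
    (c₁ : ℝ) (hc₁ : 0 < c₁)
    (y₀ : ℝ) (hy₀ : y₀ < 0) :
    MeasureTheory.IntegrableOn
      (fun y => 1 / (Real.tanh (c * y) *
        Real.sqrt (c ^ 2 * (n : ℝ) ^ 2 + c₁ * Real.sinh (c * y) ^ (2 * n))))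
      (Set.Iio y₀) ∧
    ¬ MeasureTheory.IntegrableOn
      (fun y => 1 / (Real.tanh (c * y) *
        Real.sqrt (c ^ 2 * (n : ℝ) ^ 2 + c₁ * Real.sinh (c * y) ^ (2 * n))))
      (Set.Ioo y₀ 0) := by
  have hn₀ : n ≠ 0 := Nat.one_le_iff_ne_zero.1 hn
  exact (betaIII_integrability_general hn₀ (by positivity) c₁ hc.ne' hy₀).imp_left (· hc₁)
end
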